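/- Let M : ℝ² → ℝ be smooth with all partial derivatives up to order 9 square-integrable on ℝ², and let Ω := {x∈ℝ³ : x₁ > M(x₂,x₃)}. For every integer k ≥ 2 there exists a constant C > 0 (depending only on k and M) such that for every k-times continuously differentiable f : closure(Ω) → ℝ with ∫_Ω |∇^j f|² dx < ∞ for 0 ≤ j ≤ k, one has ‖f‖_{H^{k-1}(Ω)} ≤ C ‖f‖_{H^{k}(Ω)}^{1-1/k} ‖f‖_{L²(Ω)}^{1/k}, where ‖f‖_{H^m(Ω)}² := ∑_{j=0}^{m} ∫_Ω |∇^j f|² dx. -/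

import Mathlib

/- STATEMENT 6: Gagliardo–Nirenberg interpolation
‖f‖_{H^{k-1}} ≤ C ‖f‖_{H^k}^{1-1/k} ‖f‖_{L²}^{1/k} on the perturbed half-space. -/

noncomputable section

open MeasureTheory Real Set Filter

abbrev E3 : Type := EuclideanSpace ℝ (Fin 3)
abbrev E2 : Type := EuclideanSpace ℝ (Fin 2)

/-- Projection on the tangential variables `x' = (x₂, x₃)`. -/
def proj2 (x : E3) : E2 := (WithLp.equiv 2 (Fin 2 → ℝ)).symm ![x 1, x 2]

/-- The perturbed half-space `Ω = {x : x₁ > M(x₂,x₃)}`. -/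
def Omg (M : E2 → ℝ) : Set E3 := {x : E3 | M (proj2 x) < x 0}

/-- The `H^m(O)` Sobolev norm, `(∑_{j=0}^m ∫_O |∇^j f|² dx)^{1/2}`. -/
def sobNorm (m : ℕ) (O : Set E3) (f : E3 → ℝ) : ℝ :=
  Real.sqrt (∑ j ∈ Finset.range (m + 1), ∫ x in O, ‖iteratedFDeriv ℝ j f x‖ ^ 2)

section GN

set_option maxSynthPendingDepth 3

open scoped ENNReal

lemma gn_cs {t : ℝ} (ht : 0 < t) {φ : ℝ → ℝ} (hφ : ContinuousOn φ (Icc 0 t)) :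
    (∫ s in (0:ℝ)..t, φ s) ^ 2 ≤ t * ∫ s in (0:ℝ)..t, φ s ^ 2 := by
  have hu : uIcc 0 t = Icc 0 t := uIcc_of_le ht.le
  have i1 : IntervalIntegrable φ volume 0 t :=
    ContinuousOn.intervalIntegrable (by rwa [hu])
  have i2 : IntervalIntegrable (fun s => φ s ^ 2) volume 0 t :=
    ContinuousOn.intervalIntegrable (by rw [hu]; exact hφ.pow 2)
  set m := (∫ s in (0:ℝ)..t, φ s) / t with hm
  have h0 : 0 ≤ ∫ s in (0:ℝ)..t, (φ s ^ 2 - (2 * m) * φ s + m ^ 2) := by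
    apply intervalIntegral.integral_nonneg ht.le
    intro s _
    nlinarith [sq_nonneg (φ s - m)]
  rw [intervalIntegral.integral_add (i2.sub (i1.const_mul _)) (by simp),
    intervalIntegral.integral_sub i2 (i1.const_mul _),
    intervalIntegral.integral_const_mul, intervalIntegral.integral_const] at h0
  have hI : ∫ s in (0:ℝ)..t, φ s = m * t := by rw [hm]; field_simp
  rw [hI] at h0 ⊢
  simp only [smul_eq_mul, sub_zero] at h0
  nlinarith

lemma gn_fub (ψ : E2 → ℝ≥0∞) (hψ : Measurable ψ) (x : E2) :
    ∫⁻ a : ℝ, ∫⁻ b : ℝ, ψ (x + a • EuclideanSpace.single 0 1 + b • EuclideanSpace.single 1 1)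
      = ∫⁻ y, ψ y := by
  have e1 := EuclideanSpace.volume_preserving_symm_measurableEquiv_toLp (Fin 2)
  have e2 := volume_preserving_finTwoArrow ℝ
  have e3 := (e2.comp e1).symm ((MeasurableEquiv.toLp 2 (Fin 2 → ℝ)).symm.trans
    MeasurableEquiv.finTwoArrow)
  have hx : Measurable fun y => ψ (x + y) := hψ.comp (by fun_prop)
  rw [← lintegral_add_left_eq_self ψ x, ← e3.lintegral_comp hx, Measure.volume_eq_prod]
  refine Eq.trans ?_ (lintegral_prod _ (hx.comp e3.measurable).aemeasurable).symm
  congr 1; ext a; congr 1; ext b; congr 1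
  rw [add_assoc]
  congr 1
  ext i
  fin_cases i <;> simp [MeasurableEquiv.finTwoArrow]

section Vec

variable {V : Type*} [NormedAddCommGroup V] [NormedSpace ℝ V] [CompleteSpace V]

lemma gn_diff {t : ℝ} {u du : ℝ → V}
    (hu : ∀ s ∈ Icc 0 t, HasDerivAt u (du s) s) (hdu : ContinuousOn du (Icc 0 t))
    {s : ℝ} (hs : s ∈ Icc 0 t) : ‖u s - u 0‖ ≤ ∫ r in (0:ℝ)..t, ‖du r‖ := by
  have hsub : uIcc 0 s ⊆ Icc 0 t := by
    rw [uIcc_of_le hs.1]; exact Icc_subset_Icc_right hs.2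
  rw [← intervalIntegral.integral_eq_sub_of_hasDerivAt (fun r hr => hu r (hsub hr))
    ((hdu.mono hsub).intervalIntegrable)]
  refine (intervalIntegral.norm_integral_le_integral_norm hs.1).trans ?_
  apply intervalIntegral.integral_mono_interval le_rfl hs.1 hs.2
  · exact Eventually.of_forall fun _ => norm_nonneg _
  · apply ContinuousOn.intervalIntegrable
    rw [uIcc_of_le (hs.1.trans hs.2)]; exact hdu.norm

lemma gn_taylor {t : ℝ} (ht : 0 < t) {u du ddu : ℝ → V}
    (hu : ∀ s ∈ Icc 0 t, HasDerivAt u (du s) s)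
    (hu1 : ∀ s ∈ Icc 0 t, HasDerivAt du (ddu s) s) (hu2 : ContinuousOn ddu (Icc 0 t)) :
    t ^ 2 * ‖du 0‖ ^ 2 ≤
      3 * (‖u t‖ ^ 2 + ‖u 0‖ ^ 2 + t ^ 3 * ∫ s in (0:ℝ)..t, ‖ddu s‖ ^ 2) := by
  have hcs := gn_cs ht hu2.norm
  set K := ∫ s in (0:ℝ)..t, ‖ddu s‖ with hK
  have hd : ∀ s ∈ Icc 0 t, ‖du s - du 0‖ ≤ K := fun s hs => gn_diff hu1 hu2 hs
  have h1 := (convex_Icc (0:ℝ) t).norm_image_sub_le_of_norm_hasDerivWithin_le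
    (f := fun s => u s - s • du 0) (f' := fun s => du s - (1:ℝ) • du 0) (C := K) (x := 0) (y := t)
    (fun s hs => ((hu s hs).sub ((hasDerivAt_id s).smul_const _)).hasDerivWithinAt)
    (fun s hs => by simpa using hd s hs) ⟨le_rfl, ht.le⟩ ⟨ht.le, le_rfl⟩
  simp only [zero_smul, sub_zero, Real.norm_eq_abs, abs_of_pos ht] at h1
  have h2 : t * ‖du 0‖ ≤ ‖u t‖ + ‖u 0‖ + K * t := by
    calc t * ‖du 0‖ = ‖t • du 0‖ := by rw [norm_smul, Real.norm_eq_abs, abs_of_pos ht]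
      _ = ‖u t - u 0 - (u t - t • du 0 - u 0)‖ := by congr 1; abel
      _ ≤ ‖u t‖ + ‖u 0‖ + ‖u t - t • du 0 - u 0‖ :=
        (norm_sub_le _ _).trans (by gcongr; exact norm_sub_le _ _)
      _ ≤ _ := by gcongr
  have h3 : (t * ‖du 0‖) ^ 2 ≤ (‖u t‖ + ‖u 0‖ + K * t) ^ 2 := by gcongr
  have h4 : (K * t) ^ 2 ≤ t ^ 3 * ∫ s in (0:ℝ)..t, ‖ddu s‖ ^ 2 := by
    rw [mul_pow]
    nlinarith [mul_le_mul_of_nonneg_left hcs (sq_nonneg t)]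
  nlinarith [sq_nonneg (‖u t‖ - ‖u 0‖), sq_nonneg (‖u t‖ - K * t), sq_nonneg (‖u 0‖ - K * t)]

lemma gn_sob1 {u du : ℝ → V}
    (hu : ∀ s ∈ Icc (0:ℝ) 1, HasDerivAt u (du s) s) (hdu : ContinuousOn du (Icc 0 1)) :
    ‖u 0‖ ^ 2 ≤ 2 * (∫ s in (0:ℝ)..1, ‖u s‖ ^ 2) + 2 * ∫ s in (0:ℝ)..1, ‖du s‖ ^ 2 := by
  have hcs := gn_cs one_pos hdu.norm
  set K := ∫ s in (0:ℝ)..1, ‖du s‖ with hK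
  have hc : ContinuousOn u (Icc 0 1) := fun s hs => (hu s hs).continuousAt.continuousWithinAt
  have i2 : IntervalIntegrable (fun s => ‖u s‖ ^ 2) volume 0 1 :=
    ContinuousOn.intervalIntegrable (by rw [uIcc_of_le zero_le_one]; exact hc.norm.pow 2)
  have h : ∀ s ∈ Icc (0:ℝ) 1, ‖u 0‖ ^ 2 ≤ 2 * ‖u s‖ ^ 2 + 2 * K ^ 2 := by
    intro s hs
    have h1 := gn_diff hu hdu hs
    have h2 : ‖u 0‖ ≤ ‖u s‖ + K := by
      have := norm_sub_norm_le (u 0) (u s)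
      rw [norm_sub_rev] at this
      linarith
    have h3 : ‖u 0‖ ^ 2 ≤ (‖u s‖ + K) ^ 2 := by gcongr
    nlinarith [sq_nonneg (‖u s‖ - K)]
  have h5 := intervalIntegral.integral_mono_on zero_le_one (by simp)
    ((i2.const_mul 2).add (by simp)) h
  rw [intervalIntegral.integral_add (i2.const_mul 2) (by simp)] at h5
  simp only [intervalIntegral.integral_const, intervalIntegral.integral_const_mul] at h5
  norm_num at h5
  linarith

lemma gn_conv {t : ℝ} (ht : 0 ≤ t) {w : ℝ → V} (hw : ContinuousOn w (Icc 0 t)) :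
    ENNReal.ofReal (∫ s in (0:ℝ)..t, ‖w s‖ ^ 2) = ∫⁻ s in Ioc 0 t, ‖w s‖ₑ ^ 2 := by
  rw [intervalIntegral.integral_of_le ht, ofReal_integral_eq_lintegral_ofReal]
  · simp [ENNReal.ofReal_pow]
  · exact ((hw.norm.pow 2).integrableOn_Icc).mono_set Ioc_subset_Icc_self
  · exact Eventually.of_forall fun _ => by positivity

lemma gn_taylor_e {t : ℝ} (ht : 0 < t) {u du ddu : ℝ → V}
    (hu : ∀ s ∈ Icc 0 t, HasDerivAt u (du s) s)
    (hu1 : ∀ s ∈ Icc 0 t, HasDerivAt du (ddu s) s) (hu2 : ContinuousOn ddu (Icc 0 t)) :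
    ENNReal.ofReal (t ^ 2) * ‖du 0‖ₑ ^ 2 ≤
      3 * (‖u t‖ₑ ^ 2 + ‖u 0‖ₑ ^ 2 + ENNReal.ofReal (t ^ 3) * ∫⁻ s in Ioc 0 t, ‖ddu s‖ₑ ^ 2) := by
  have h := ENNReal.ofReal_le_ofReal (gn_taylor ht hu hu1 hu2)
  have hp : 0 ≤ ∫ s in (0:ℝ)..t, ‖ddu s‖ ^ 2 :=
    intervalIntegral.integral_nonneg ht.le fun _ _ => by positivity
  rw [ENNReal.ofReal_mul (by positivity), ENNReal.ofReal_mul (by positivity),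
    ENNReal.ofReal_add (by positivity) (by positivity),
    ENNReal.ofReal_add (by positivity) (by positivity),
    ENNReal.ofReal_mul (by positivity), gn_conv ht.le hu2] at h
  simpa [ENNReal.ofReal_pow] using h

lemma gn_sob1_e {u du : ℝ → V}
    (hu : ∀ s ∈ Icc (0:ℝ) 1, HasDerivAt u (du s) s) (hdu : ContinuousOn du (Icc 0 1)) :
    ‖u 0‖ₑ ^ 2 ≤ 2 * (∫⁻ s in Ioc (0:ℝ) 1, ‖u s‖ₑ ^ 2) +
      2 * ∫⁻ s in Ioc (0:ℝ) 1, ‖du s‖ₑ ^ 2 := by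
  have h := ENNReal.ofReal_le_ofReal (gn_sob1 hu hdu)
  have hc : ContinuousOn u (Icc 0 1) := fun s hs => (hu s hs).continuousAt.continuousWithinAt
  have hp : 0 ≤ ∫ s in (0:ℝ)..1, ‖u s‖ ^ 2 :=
    intervalIntegral.integral_nonneg zero_le_one fun _ _ => by positivity
  have hpp : 0 ≤ ∫ s in (0:ℝ)..1, ‖du s‖ ^ 2 :=
    intervalIntegral.integral_nonneg zero_le_one fun _ _ => by positivity
  rw [ENNReal.ofReal_add (by positivity) (by positivity),
    ENNReal.ofReal_mul (by positivity), ENNReal.ofReal_mul (by positivity),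
    gn_conv zero_le_one hdu, gn_conv zero_le_one hc] at h
  simpa [ENNReal.ofReal_pow] using h

/-- directional interpolation on a forward-invariant open set -/
lemma gn_dir {O : Set E3} (hO : IsOpen O) (v : E3)
    (hinv : ∀ x ∈ O, ∀ t : ℝ, 0 ≤ t → x + t • v ∈ O) {G : E3 → V}
    (hG : ∀ x ∈ O, ContDiffAt ℝ 2 G x) {t : ℝ} (ht : 0 < t) :
    ENNReal.ofReal (t ^ 2) * ∫⁻ x in O, ‖fderiv ℝ G x v‖ₑ ^ 2 ≤
      3 * (2 * (∫⁻ x in O, ‖G x‖ₑ ^ 2) + ENNReal.ofReal (t ^ 4) * (‖v‖ₑ ^ 4 *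
        ∫⁻ x in O, ‖fderiv ℝ (fderiv ℝ G) x‖ₑ ^ 2)) := by
  classical
  have hG1 : ∀ x ∈ O, ContDiffAt ℝ 1 (fderiv ℝ G) x := fun x hx =>
    (hG x hx).fderiv_right (by norm_num)
  have hG2 : ∀ x ∈ O, ContDiffAt ℝ 0 (fderiv ℝ (fderiv ℝ G)) x := fun x hx =>
    (hG1 x hx).fderiv_right (by norm_num)
  have c0 : ContinuousOn (fun x => ‖G x‖ₑ ^ 2) O := fun x hx =>
    ((ENNReal.continuous_pow 2).continuousAt.comp
      (continuous_enorm.continuousAt.comp (hG x hx).continuousAt)).continuousWithinAt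
  have c2 : ContinuousOn (fun x => ‖fderiv ℝ (fderiv ℝ G) x v v‖ₑ ^ 2) O := fun x hx =>
    ((ENNReal.continuous_pow 2).continuousAt.comp
      (continuous_enorm.continuousAt.comp
        (((hG2 x hx).continuousAt.clm_apply continuousAt_const).clm_apply
          continuousAt_const))).continuousWithinAt
  have m0 : Measurable (O.indicator (fun x => ‖G x‖ₑ ^ 2)) := by
    rw [← piecewise_eq_indicator]
    exact c0.measurable_piecewise continuousOn_const hO.measurableSet
  set φ := O.indicator (fun x => ‖fderiv ℝ (fderiv ℝ G) x v v‖ₑ ^ 2) with hφ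
  have m2 : Measurable φ := by
    rw [hφ, ← piecewise_eq_indicator]
    exact c2.measurable_piecewise continuousOn_const hO.measurableSet
  have hjm : Measurable (fun p : E3 × ℝ => φ (p.1 + p.2 • v)) :=
    m2.comp (by fun_prop)
  have hpt : ∀ x ∈ O, ENNReal.ofReal (t ^ 2) * ‖fderiv ℝ G x v‖ₑ ^ 2 ≤
      3 * (O.indicator (fun x => ‖G x‖ₑ ^ 2) (x + t • v) + O.indicator (fun x => ‖G x‖ₑ ^ 2) x
        + ENNReal.ofReal (t ^ 3) * ∫⁻ s in Ioc 0 t, φ (x + s • v)) := by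
    intro x hx
    have hl : ∀ s : ℝ, HasDerivAt (fun s : ℝ => x + s • v) v s := fun s => by
      simpa using ((hasDerivAt_id s).smul_const v).const_add x
    have h := gn_taylor_e ht (u := fun s => G (x + s • v))
      (du := fun s => fderiv ℝ G (x + s • v) v)
      (ddu := fun s => fderiv ℝ (fderiv ℝ G) (x + s • v) v v)
      (fun s hs => (((hG _ (hinv x hx s hs.1)).differentiableAt
        (by norm_num)).hasFDerivAt).comp_hasDerivAt s (hl s))
      (fun s hs => by
        have := (((hG1 _ (hinv x hx s hs.1)).differentiableAt
          (by norm_num)).hasFDerivAt).comp_hasDerivAt s (hl s)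
        simpa using this.clm_apply (hasDerivAt_const s v))
      (fun s hs => by
        have h1 : ContinuousAt (fun s : ℝ => fderiv ℝ (fderiv ℝ G) (x + s • v)) s :=
          ContinuousAt.comp (f := fun s : ℝ => x + s • v)
            (hG2 _ (hinv x hx s hs.1)).continuousAt (hl s).continuousAt
        exact ((h1.clm_apply continuousAt_const).clm_apply
          continuousAt_const).continuousWithinAt)
    simp only [zero_smul, add_zero] at h
    rw [indicator_of_mem (hinv x hx t ht.le), indicator_of_mem hx]
    refine h.trans_eq ?_
    congr 3
    apply setLIntegral_congr_fun measurableSet_Ioc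
    intro s hs
    simp only [hφ]
    rw [indicator_of_mem (hinv x hx s hs.1.le)]
  have hJ : Measurable fun x : E3 => ∫⁻ s in Ioc 0 t, φ (x + s • v) :=
    hjm.lintegral_prod_right'
  rw [← lintegral_const_mul' _ _ ENNReal.ofReal_ne_top]
  refine (setLIntegral_mono' hO.measurableSet hpt).trans ?_
  refine (setLIntegral_le_lintegral _ _).trans ?_
  rw [lintegral_const_mul' _ _ (by norm_num), lintegral_add_right _ (hJ.const_mul _),
    lintegral_add_right _ m0, lintegral_add_right_eq_self (O.indicator (fun x => ‖G x‖ₑ ^ 2)),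
    lintegral_const_mul' _ _ ENNReal.ofReal_ne_top, lintegral_indicator hO.measurableSet,
    lintegral_lintegral_swap (f := fun x s => φ (x + s • v)) hjm.aemeasurable]
  simp_rw [lintegral_add_right_eq_self φ]
  rw [lintegral_const, hφ, lintegral_indicator hO.measurableSet, ← two_mul]
  gcongr 3 * (_ + ?_)
  simp only [MeasurableSet.univ, Measure.restrict_apply, univ_inter, Real.volume_Ioc, sub_zero]
  rw [mul_comm _ (ENNReal.ofReal t), ← mul_assoc, ← ENNReal.ofReal_mul (by positivity),
    ← pow_succ]
  gcongr
  rw [← lintegral_const_mul' _ _ (by finiteness)]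
  apply lintegral_mono
  intro x
  have : ‖fderiv ℝ (fderiv ℝ G) x v v‖ₑ ≤ ‖fderiv ℝ (fderiv ℝ G) x‖ₑ * ‖v‖ₑ * ‖v‖ₑ :=
    (ContinuousLinearMap.le_opENorm _ _).trans
      (by gcongr; exact ContinuousLinearMap.le_opENorm _ _)
  calc ‖fderiv ℝ (fderiv ℝ G) x v v‖ₑ ^ 2 ≤ (‖fderiv ℝ (fderiv ℝ G) x‖ₑ * ‖v‖ₑ * ‖v‖ₑ) ^ 2 := by
        gcongr
    _ = _ := by ring

lemma gn_line {h : E2 → V} (hh : ContDiff ℝ 1 h) (e : E2) (he : ‖e‖ = 1) (x : E2) :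
    ‖h x‖ₑ ^ 2 ≤ 2 * (∫⁻ s : ℝ, ‖h (x + s • e)‖ₑ ^ 2) +
      2 * ∫⁻ s : ℝ, ‖fderiv ℝ h (x + s • e)‖ₑ ^ 2 := by
  have hl : ∀ s : ℝ, HasDerivAt (fun s : ℝ => x + s • e) e s := fun s => by
    simpa using ((hasDerivAt_id s).smul_const e).const_add x
  have hc : Continuous (fderiv ℝ h) := hh.continuous_fderiv (by norm_num)
  have := gn_sob1_e (u := fun s => h (x + s • e)) (du := fun s => fderiv ℝ h (x + s • e) e)
    (fun s hs => ((hh.differentiable (by norm_num) _).hasFDerivAt).comp_hasDerivAt s (hl s))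
    (Continuous.continuousOn (by fun_prop))
  simp only [zero_smul, add_zero] at this
  refine this.trans ?_
  gcongr
  · exact Measure.restrict_le_self
  · exact Measure.restrict_le_self
  · rename_i s
    have := (fderiv ℝ h (x + s • e)).le_opENorm e
    have he2 : ‖e‖ₑ = 1 := by rw [← ofReal_norm, he]; simp
    rwa [he2, mul_one] at this

lemma gn_sup {h : E2 → V} (hh : ContDiff ℝ 2 h)
    (h0 : ∫⁻ x, ‖h x‖ₑ ^ 2 < ∞) (h1 : ∫⁻ x, ‖fderiv ℝ h x‖ₑ ^ 2 < ∞)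
    (h2 : ∫⁻ x, ‖fderiv ℝ (fderiv ℝ h) x‖ₑ ^ 2 < ∞) :
    ∃ L : NNReal, ∀ x, ‖h x‖₊ ≤ L := by
  have hh1 : ContDiff ℝ 1 (fderiv ℝ h) := hh.fderiv_right (by norm_num)
  have hc0 : Continuous h := hh.continuous
  have hc1 : Continuous (fderiv ℝ h) := hh1.continuous
  have hc2 : Continuous (fderiv ℝ (fderiv ℝ h)) := hh1.continuous_fderiv (by norm_num)
  have m0 : Measurable fun x => ‖h x‖ₑ ^ 2 :=
    ((ENNReal.continuous_pow 2).comp (continuous_enorm.comp hc0)).measurable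
  have m1 : Measurable fun x => ‖fderiv ℝ h x‖ₑ ^ 2 :=
    ((ENNReal.continuous_pow 2).comp (continuous_enorm.comp hc1)).measurable
  have m2 : Measurable fun x => ‖fderiv ℝ (fderiv ℝ h) x‖ₑ ^ 2 :=
    ((ENNReal.continuous_pow 2).comp (continuous_enorm.comp hc2)).measurable
  set I0 := ∫⁻ x, ‖h x‖ₑ ^ 2
  set I1 := ∫⁻ x, ‖fderiv ℝ h x‖ₑ ^ 2
  set I2 := ∫⁻ x, ‖fderiv ℝ (fderiv ℝ h) x‖ₑ ^ 2
  set B := 2 * (2 * I0 + 2 * I1) + 2 * (2 * I1 + 2 * I2) with hB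
  have hBt : B ≠ ∞ := by finiteness
  have key : ∀ x, ‖h x‖ₑ ^ 2 ≤ B := by
    intro x
    have a1 : ∫⁻ s : ℝ, ‖h (x + s • EuclideanSpace.single 0 1)‖ₑ ^ 2 ≤ 2 * I0 + 2 * I1 := by
      refine (lintegral_mono fun s => gn_line (hh.of_le (by norm_num)) (EuclideanSpace.single 1 1)
        (by simp) _).trans ?_
      rw [lintegral_add_left, lintegral_const_mul' _ _ (by norm_num),
        lintegral_const_mul' _ _ (by norm_num), gn_fub _ m0, gn_fub _ m1]
      refine Measurable.const_mul ?_ _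
      exact Measurable.lintegral_prod_right' (f := fun p : ℝ × ℝ => ‖h (x +
        p.1 • EuclideanSpace.single 0 1 + p.2 • EuclideanSpace.single 1 1)‖ₑ ^ 2)
        (m0.comp (by fun_prop))
    have a2 : ∫⁻ s : ℝ, ‖fderiv ℝ h (x + s • EuclideanSpace.single 0 1)‖ₑ ^ 2
        ≤ 2 * I1 + 2 * I2 := by
      refine (lintegral_mono fun s => gn_line hh1 (EuclideanSpace.single 1 1)
        (by simp) _).trans ?_
      rw [lintegral_add_left, lintegral_const_mul' _ _ (by norm_num),
        lintegral_const_mul' _ _ (by norm_num), gn_fub _ m1, gn_fub _ m2]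
      refine Measurable.const_mul ?_ _
      exact Measurable.lintegral_prod_right' (f := fun p : ℝ × ℝ => ‖fderiv ℝ h (x +
        p.1 • EuclideanSpace.single 0 1 + p.2 • EuclideanSpace.single 1 1)‖ₑ ^ 2)
        (m1.comp (by fun_prop))
    refine (gn_line (hh.of_le (by norm_num)) (EuclideanSpace.single 0 1) (by simp) x).trans ?_
    rw [hB]
    gcongr
  refine ⟨B.toNNReal + 1, fun x => ?_⟩
  have hk := key x
  rw [← ENNReal.coe_toNNReal hBt, enorm_eq_nnnorm] at hk
  norm_cast at hk
  have : (‖h x‖₊ : ℝ) ^ 2 ≤ B.toNNReal := by exact_mod_cast hk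
  have h2 : (‖h x‖₊ : ℝ) ≤ B.toNNReal + 1 := by nlinarith [sq_nonneg ((‖h x‖₊ : ℝ) - 1)]
  exact_mod_cast h2

end Vec

lemma gn_norm_two {E F : Type*} [NormedAddCommGroup E] [NormedSpace ℝ E]
    [NormedAddCommGroup F] [NormedSpace ℝ F] (f : E → F) (j : ℕ) (x : E) :
    ‖fderiv ℝ (fderiv ℝ (iteratedFDeriv ℝ j f)) x‖ = ‖iteratedFDeriv ℝ (j + 2) f x‖ := by
  rw [← norm_fderiv_iteratedFDeriv, iteratedFDeriv_succ_eq_comp_left (n := j),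
    ← norm_iteratedFDeriv_one, ← norm_iteratedFDeriv_one,
    LinearIsometryEquiv.norm_iteratedFDeriv_comp_left]

lemma gn_lint {E F : Type*} [NormedAddCommGroup F] [MeasurableSpace E] {μ : Measure E}
    {g : E → F} (h : Integrable (fun x => ‖g x‖ ^ 2) μ) :
    ∫⁻ x, ‖g x‖ₑ ^ 2 ∂μ = ENNReal.ofReal (∫ x, ‖g x‖ ^ 2 ∂μ) := by
  rw [ofReal_integral_eq_lintegral_ofReal h (Eventually.of_forall fun _ => by positivity)]
  simp [ENNReal.ofReal_pow]

lemma gn_lip (M : E2 → ℝ) (hM : ContDiff ℝ (⊤ : ℕ∞) M)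
    (hMint : ∀ j ≤ 9, Integrable fun x' : E2 => ‖iteratedFDeriv ℝ j M x'‖ ^ 2) :
    ∃ L : NNReal, LipschitzWith L M := by
  have hb : ∃ L : NNReal, ∀ x, ‖iteratedFDeriv ℝ 1 M x‖₊ ≤ L := by
    apply gn_sup (hM.iteratedFDeriv_right (by norm_cast))
    · rw [gn_lint (hMint 1 (by norm_num))]; simp
    · have := hMint 2 (by norm_num)
      simp_rw [← norm_fderiv_iteratedFDeriv (n := 1)] at this
      rw [gn_lint this]; simp
    · have := hMint 3 (by norm_num)
      simp_rw [← gn_norm_two M 1] at this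
      rw [gn_lint this]; simp
  obtain ⟨L, hL⟩ := hb
  refine ⟨L, lipschitzWith_of_nnnorm_fderiv_le (𝕜 := ℝ) (hM.differentiable (by simp)) fun x => ?_⟩
  have : ‖fderiv ℝ M x‖ ≤ L := by
    rw [← norm_iteratedFDeriv_one]; exact_mod_cast hL x
  exact_mod_cast this

/-- The three directions. -/
def gnv (L : ℝ) (i : Fin 3) : E3 :=
  if i = 0 then EuclideanSpace.single 0 1
  else EuclideanSpace.single i 1 + L • EuclideanSpace.single 0 1

lemma gn_inv {M : E2 → ℝ} {L : NNReal} (hL : LipschitzWith L M) (i : Fin 3)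
    (x : E3) (hx : x ∈ Omg M) (t : ℝ) (ht : 0 ≤ t) : x + t • gnv L i ∈ Omg M := by
  simp only [Omg, mem_ofPred_eq] at hx ⊢
  have key : ∀ w : E2, proj2 (x + t • gnv L i) = proj2 x + t • w → ‖w‖ ≤ 1 →
      M (proj2 (x + t • gnv L i)) ≤ M (proj2 x) + L * t := by
    intro w hw hw1
    have := hL.dist_le_mul (proj2 (x + t • gnv L i)) (proj2 x)
    rw [Real.dist_eq, hw, dist_eq_norm, add_sub_cancel_left, norm_smul, Real.norm_eq_abs,
      abs_of_nonneg ht] at this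
    rw [hw]
    have h2 : (L:ℝ) * (t * ‖w‖) ≤ L * t := by
      have : t * ‖w‖ ≤ t := by nlinarith
      gcongr
    linarith [le_abs_self (M (proj2 x + t • w) - M (proj2 x))]
  fin_cases i
  · have : proj2 (x + t • gnv L 0) = proj2 x := by
      ext j; fin_cases j <;> simp [proj2, gnv]
    simp only [Fin.zero_eta] at this ⊢
    rw [this]
    simp [gnv]; linarith
  · have := key (EuclideanSpace.single 0 1)
      (by ext j; fin_cases j <;> simp [proj2, gnv]) (by simp)
    refine this.trans_lt ?_
    simp [gnv]; linarith
  · have := key (EuclideanSpace.single 1 1)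
      (by ext j; fin_cases j <;> simp [proj2, gnv]) (by simp)
    refine this.trans_lt ?_
    simp [gnv]; linarith

lemma gn_op {V : Type*} [NormedAddCommGroup V] [NormedSpace ℝ V] (L : NNReal) (A : E3 →L[ℝ] V) :
    ‖A‖ ≤ (1 + 2 * L) * ∑ i, ‖A (gnv L i)‖ := by
  have hb : ‖A‖ ≤ ∑ i, ‖A (EuclideanSpace.single i 1)‖ := by
    refine A.opNorm_le_bound (by positivity) fun x => ?_
    have hx : x = ∑ i, x i • EuclideanSpace.single i (1:ℝ) := by
      ext j; simp [Finset.sum_apply, Pi.single_apply]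
    calc ‖A x‖ = ‖∑ i, x i • A (EuclideanSpace.single i (1:ℝ))‖ := by
          conv_lhs => rw [hx]
          simp
      _ ≤ ∑ i, ‖x i • A (EuclideanSpace.single i (1:ℝ))‖ := norm_sum_le _ _
      _ ≤ ∑ i, ‖A (EuclideanSpace.single i (1:ℝ))‖ * ‖x‖ := by
          gcongr with i
          rw [norm_smul, mul_comm]
          gcongr
          exact PiLp.norm_apply_le x i
      _ = _ := by rw [Finset.sum_mul]
  have h1 : ∀ i : Fin 3, i ≠ 0 → ‖A (EuclideanSpace.single i 1)‖ ≤
      ‖A (gnv L i)‖ + L * ‖A (gnv L 0)‖ := by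
    intro i hi
    have : A (EuclideanSpace.single i 1) = A (gnv L i) - (L:ℝ) • A (gnv L 0) := by
      simp [gnv, hi]
    rw [this]
    refine (norm_sub_le _ _).trans_eq ?_
    rw [norm_smul]; simp
  have h0 : A (EuclideanSpace.single 0 1) = A (gnv L 0) := by simp [gnv]
  rw [Fin.sum_univ_three] at hb ⊢
  have := h1 1 (by decide)
  have := h1 2 (by decide)
  rw [h0] at hb
  have hLn : (0:ℝ) ≤ L := L.2
  nlinarith [mul_nonneg hLn (norm_nonneg (A (gnv L 1))),
    mul_nonneg hLn (norm_nonneg (A (gnv L 2)))]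

lemma gn_full {V : Type*} [NormedAddCommGroup V] [NormedSpace ℝ V] [CompleteSpace V]
    {M : E2 → ℝ} {L : NNReal} (hL : LipschitzWith L M) (hO : IsOpen (Omg M)) {G : E3 → V}
    (hG : ∀ x ∈ Omg M, ContDiffAt ℝ 2 G x) {t : ℝ} (ht : 0 < t) :
    ENNReal.ofReal (t ^ 2) * ∫⁻ x in Omg M, ‖fderiv ℝ G x‖ₑ ^ 2 ≤
      ENNReal.ofReal (3 * (1 + 2 * L) ^ 2) * ∑ i : Fin 3,
      3 * (2 * (∫⁻ x in Omg M, ‖G x‖ₑ ^ 2) + ENNReal.ofReal (t ^ 4) * (‖gnv L i‖ₑ ^ 4 *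
        ∫⁻ x in Omg M, ‖fderiv ℝ (fderiv ℝ G) x‖ₑ ^ 2)) := by
  have hpt : ∀ x, ‖fderiv ℝ G x‖ₑ ^ 2 ≤
      ENNReal.ofReal (3 * (1 + 2 * L) ^ 2) * ∑ i, ‖fderiv ℝ G x (gnv L i)‖ₑ ^ 2 := by
    intro x
    have h1 := gn_op L (fderiv ℝ G x)
    have h2 : ‖fderiv ℝ G x‖ ^ 2 ≤ 3 * (1 + 2 * L) ^ 2 * ∑ i, ‖fderiv ℝ G x (gnv L i)‖ ^ 2 := by
      have h3 := pow_le_pow_left₀ (norm_nonneg _) h1 2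
      have h4 := sq_sum_le_card_mul_sum_sq (s := Finset.univ)
        (f := fun i => ‖fderiv ℝ G x (gnv L i)‖)
      simp only [Finset.card_univ, Fintype.card_fin, Nat.cast_ofNat] at h4
      rw [mul_pow] at h3
      have := mul_le_mul_of_nonneg_left h4 (sq_nonneg (1 + 2 * (L:ℝ)))
      linarith
    have h5 := ENNReal.ofReal_le_ofReal h2
    rw [ENNReal.ofReal_mul (by positivity), ENNReal.ofReal_sum_of_nonneg
      (fun _ _ => by positivity)] at h5
    simpa only [ENNReal.ofReal_pow (norm_nonneg _), ofReal_norm] using h5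
  borelize V
  calc _ ≤ ENNReal.ofReal (t ^ 2) * ∫⁻ x in Omg M, ENNReal.ofReal (3 * (1 + 2 * L) ^ 2) *
        ∑ i, ‖fderiv ℝ G x (gnv L i)‖ₑ ^ 2 := by
        gcongr with x
        exact hpt x
    _ = ENNReal.ofReal (3 * (1 + 2 * L) ^ 2) * ∑ i, ENNReal.ofReal (t ^ 2) *
        ∫⁻ x in Omg M, ‖fderiv ℝ G x (gnv L i)‖ₑ ^ 2 := by
        rw [lintegral_const_mul' _ _ ENNReal.ofReal_ne_top, lintegral_finsetSum,
          ← Finset.mul_sum]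
        · ring
        · intro i _
          exact (measurable_fderiv_apply_const ℝ G (gnv L i)).enorm.pow_const 2
    _ ≤ _ := by
        refine mul_le_mul_right (Finset.sum_le_sum fun i _ => ?_) _
        exact gn_dir hO _ (gn_inv hL i) hG ht

lemma gn_open {M : E2 → ℝ} (hM : Continuous M) : IsOpen (Omg M) := by
  have hp : Continuous proj2 := by
    unfold proj2
    refine (PiLp.continuous_toLp 2 (fun _ : Fin 2 => ℝ)).comp ?_
    refine continuous_pi fun i => ?_
    fin_cases i <;> simp <;> fun_prop
  exact isOpen_lt (hM.comp hp) (by fun_prop)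

lemma gn_step {M : E2 → ℝ} {L : NNReal} (hL : LipschitzWith L M) :
    ∃ C : ℝ, 0 < C ∧ ∀ (k : ℕ) (f : E3 → ℝ), ContDiffOn ℝ k f (Omg M) →
      (∀ j ≤ k, IntegrableOn (fun x => ‖iteratedFDeriv ℝ j f x‖ ^ 2) (Omg M)) →
      ∀ j, j + 2 ≤ k →
      (∫ x in Omg M, ‖iteratedFDeriv ℝ (j + 1) f x‖ ^ 2) ^ 2 ≤
        C * (∫ x in Omg M, ‖iteratedFDeriv ℝ j f x‖ ^ 2) *
          ∫ x in Omg M, ‖iteratedFDeriv ℝ (j + 2) f x‖ ^ 2 := by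
  have hO := gn_open hL.continuous
  set K : ℝ := 3 * (1 + 2 * L) ^ 2 with hK
  have hKp : 0 < K := by positivity
  set W : ℝ := ∑ i, ‖gnv L i‖ ^ 4 with hW
  have hWp : 0 ≤ W := by positivity
  refine ⟨4 * (K * 18) * (K * (3 * W + 1)), by positivity, ?_⟩
  intro k f hf hint j hj
  have hcd : ∀ x ∈ Omg M, ContDiffAt ℝ k f x := fun x hx => hf.contDiffAt (hO.mem_nhds hx)
  have hG : ∀ x ∈ Omg M, ContDiffAt ℝ 2 (iteratedFDeriv ℝ j f) x := fun x hx =>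
    (hcd x hx).iteratedFDeriv_right (by norm_cast; omega)
  have i0 := hint j (by omega)
  have i1 := hint (j + 1) (by omega)
  have i2 := hint (j + 2) hj
  have e0 := gn_lint i0
  have e1 := gn_lint i1
  have e2 := gn_lint i2
  have p0 : 0 ≤ ∫ x in Omg M, ‖iteratedFDeriv ℝ j f x‖ ^ 2 :=
    integral_nonneg fun _ => by positivity
  have p1 : 0 ≤ ∫ x in Omg M, ‖iteratedFDeriv ℝ (j + 1) f x‖ ^ 2 :=
    integral_nonneg fun _ => by positivity
  have p2 : 0 ≤ ∫ x in Omg M, ‖iteratedFDeriv ℝ (j + 2) f x‖ ^ 2 :=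
    integral_nonneg fun _ => by positivity
  set a0 := ∫ x in Omg M, ‖iteratedFDeriv ℝ j f x‖ ^ 2
  set a1 := ∫ x in Omg M, ‖iteratedFDeriv ℝ (j + 1) f x‖ ^ 2
  set a2 := ∫ x in Omg M, ‖iteratedFDeriv ℝ (j + 2) f x‖ ^ 2
  have n1 : ∀ x, ‖fderiv ℝ (iteratedFDeriv ℝ j f) x‖ₑ = ‖iteratedFDeriv ℝ (j + 1) f x‖ₑ := by
    intro x; rw [← ofReal_norm, ← ofReal_norm, norm_fderiv_iteratedFDeriv]
  have n2 : ∀ x, ‖fderiv ℝ (fderiv ℝ (iteratedFDeriv ℝ j f)) x‖ₑ =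
      ‖iteratedFDeriv ℝ (j + 2) f x‖ₑ := by
    intro x; rw [← ofReal_norm, ← ofReal_norm, gn_norm_two]
  have key : ∀ t : ℝ, 0 < t → t ^ 2 * a1 ≤ K * ∑ i : Fin 3, 3 * (2 * a0 +
      t ^ 4 * (‖gnv L i‖ ^ 4 * a2)) := by
    intro t ht
    have h := gn_full hL hO hG ht
    simp_rw [n1, n2] at h
    rw [e0, e1, e2] at h
    rw [← ENNReal.ofReal_le_ofReal_iff (by positivity), ENNReal.ofReal_mul (by positivity),
      ENNReal.ofReal_mul (by positivity), ENNReal.ofReal_sum_of_nonneg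
      (fun _ _ => by positivity)]
    refine h.trans_eq ?_
    congr 1
    refine Finset.sum_congr rfl fun i _ => ?_
    rw [ENNReal.ofReal_mul (by norm_num), ENNReal.ofReal_add (by positivity) (by positivity),
      ENNReal.ofReal_mul (by norm_num), ENNReal.ofReal_mul (by positivity),
      ENNReal.ofReal_mul (by positivity), ENNReal.ofReal_pow (norm_nonneg _), ofReal_norm]
    simp
  have hq : ∀ τ : ℝ, 0 ≤ (K * (3 * W + 1) * a2) * (τ * τ) + (- a1) * τ + K * 18 * a0 := by
    intro τ
    rcases le_or_gt τ 0 with h | h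
    · have h1 : 0 ≤ (- a1) * τ := by nlinarith
      have h2 : 0 ≤ (K * (3 * W + 1) * a2) * (τ * τ) :=
        mul_nonneg (by positivity) (mul_self_nonneg τ)
      have h3 : 0 ≤ K * 18 * a0 := by positivity
      linarith
    · have hk := key (√τ) (Real.sqrt_pos.2 h)
      have s2 : √τ ^ 2 = τ := Real.sq_sqrt h.le
      have s4 : √τ ^ 4 = τ * τ := by
        rw [show (4:ℕ) = 2 * 2 from rfl, pow_mul, s2, sq]
      rw [s2, s4] at hk
      have hs : ∑ i : Fin 3, 3 * (2 * a0 + τ * τ * (‖gnv L i‖ ^ 4 * a2)) =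
          18 * a0 + 3 * (τ * τ) * W * a2 := by
        rw [hW, Fin.sum_univ_three, Fin.sum_univ_three]; ring
      rw [hs] at hk
      have : 0 ≤ K * a2 * (τ * τ) := by positivity
      linarith
  have := discrim_le_zero hq
  unfold discrim at this
  linarith

lemma gn_alg (S : ℕ → ℝ) (hS : ∀ j, 0 ≤ S j) (C : ℝ) (hC : 0 < C) (k : ℕ)
    (h : ∀ j, j + 2 ≤ k → S (j + 1) ^ 2 ≤ C * S j * S (j + 2)) :
    ∀ j, j + 1 ≤ k → S j ^ (j + 1) ≤ C ^ (∑ i ∈ Finset.range (j + 1), i) * S (j + 1) ^ j * S 0 := by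
  intro j
  induction j with
  | zero => intro _; simp
  | succ j ih =>
    intro hj
    rcases (hS (j + 1)).eq_or_lt with h0 | h0
    · rw [← h0, zero_pow (by omega)]
      have := hS 0
      have := hS (j + 1 + 1)
      positivity
    · have hs0 := hS 0
      have hs2 := hS (j + 2)
      have hs := hS j
      have h1 := ih (by omega)
      have h2 := pow_le_pow_left₀ (by positivity) (h j hj) (j + 1)
      have h3 : S (j + 1) ^ j * S (j + 1) ^ (j + 2) ≤
          S (j + 1) ^ j * (C ^ (∑ i ∈ Finset.range (j + 2), i) * S (j + 2) ^ (j + 1) * S 0) := by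
        calc _ = (S (j + 1) ^ 2) ^ (j + 1) := by ring
          _ ≤ (C * S j * S (j + 2)) ^ (j + 1) := h2
          _ = C ^ (j + 1) * S (j + 2) ^ (j + 1) * S j ^ (j + 1) := by ring
          _ ≤ C ^ (j + 1) * S (j + 2) ^ (j + 1) *
              (C ^ (∑ i ∈ Finset.range (j + 1), i) * S (j + 1) ^ j * S 0) := by gcongr
          _ = _ := by rw [Finset.sum_range_succ _ (j + 1)]; ring
      exact le_of_mul_le_mul_left h3 (by positivity)

lemma gn_sums (a : ℕ → ℝ) (ha : ∀ j, 0 ≤ a j) (C : ℝ) (hC : 0 < C) (k : ℕ)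
    (h : ∀ j, j + 2 ≤ k → a (j + 1) ^ 2 ≤ C * a j * a (j + 2)) (j : ℕ) (hj : j + 2 ≤ k) :
    (∑ i ∈ Finset.range (j + 2), a i) ^ 2 ≤ (k * (1 + k * C)) *
      (∑ i ∈ Finset.range (j + 1), a i) * ∑ i ∈ Finset.range (j + 3), a i := by
  set P := ∑ i ∈ Finset.range (j + 1), a i
  set Q := ∑ i ∈ Finset.range (j + 3), a i
  have hP : ∀ i ∈ Finset.range (j + 1), a i ≤ P := fun i hi =>
    Finset.single_le_sum (f := a) (fun i _ => ha i) hi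
  have hQ : ∀ i ∈ Finset.range (j + 3), a i ≤ Q := fun i hi =>
    Finset.single_le_sum (f := a) (fun i _ => ha i) hi
  have hP0 : 0 ≤ P := Finset.sum_nonneg fun i _ => ha i
  have hQ0 : 0 ≤ Q := Finset.sum_nonneg fun i _ => ha i
  have h1 := sq_sum_le_card_mul_sum_sq (s := Finset.range (j + 2)) (f := a)
  rw [Finset.card_range] at h1
  have h2 : ∑ i ∈ Finset.range (j + 2), a i ^ 2 ≤ (1 + k * C) * (P * Q) := by
    rw [Finset.sum_range_succ']
    have h3 : ∑ i ∈ Finset.range (j + 1), a (i + 1) ^ 2 ≤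
        ∑ i ∈ Finset.range (j + 1), C * (P * Q) := by
      refine Finset.sum_le_sum fun i hi => ?_
      have hi2 := Finset.mem_range.1 hi
      refine (h i (by omega)).trans ?_
      rw [mul_assoc]
      have := hP i hi
      have := hQ (i + 2) (Finset.mem_range.2 (by omega))
      have := ha i
      have := ha (i + 2)
      gcongr
    rw [Finset.sum_const, Finset.card_range, nsmul_eq_mul] at h3
    have h4 : a 0 ^ 2 ≤ P * Q := by
      rw [sq]
      exact mul_le_mul (hP 0 (by simp)) (hQ 0 (by simp)) (ha 0) hP0
    have h5 : ((j + 1 : ℕ) : ℝ) * (C * (P * Q)) ≤ k * (C * (P * Q)) := by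
      have : ((j + 1 : ℕ) : ℝ) ≤ k := by exact_mod_cast (by omega)
      gcongr
    linarith
  have hk : ((j + 2 : ℕ) : ℝ) ≤ k := by exact_mod_cast hj
  calc _ ≤ _ := h1
    _ ≤ k * ((1 + k * C) * (P * Q)) := by gcongr
    _ = _ := by ring

lemma gn_final (k : ℕ) (hk : 2 ≤ k) (D x y z : ℝ) (hD : 0 < D) (hx : 0 ≤ x) (hy : 0 ≤ y)
    (hz : 0 ≤ z) (h : x ^ k ≤ D * y ^ (k - 1) * z) :
    √x ≤ √D ^ (1 / (k:ℝ)) * √y ^ (1 - 1 / (k:ℝ)) * √z ^ (1 / (k:ℝ)) := by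
  have hk0 : (k:ℝ) ≠ 0 := by positivity
  have e1 : ∀ w : ℝ, 0 ≤ w → (w ^ (1 / (k:ℝ))) ^ k = w := fun w hw => by
    rw [← Real.rpow_natCast, ← Real.rpow_mul hw, one_div_mul_cancel hk0, Real.rpow_one]
  have e2 : ∀ w : ℝ, 0 ≤ w → (w ^ (1 - 1 / (k:ℝ))) ^ k = w ^ (k - 1) := fun w hw => by
    rw [← Real.rpow_natCast, ← Real.rpow_mul hw, ← Real.rpow_natCast, Nat.cast_sub (by omega)]
    congr 1
    field_simp
    simp
  rw [← pow_le_pow_iff_left₀ (by positivity) (by positivity) (n := k) (by omega), mul_pow, mul_pow,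
    e1 _ (by positivity), e1 _ (by positivity), e2 _ (by positivity),
    ← pow_le_pow_iff_left₀ (by positivity) (by positivity) (n := 2) (by omega), mul_pow, mul_pow,
    ← pow_mul, ← pow_mul, mul_comm k 2, mul_comm (k - 1) 2, pow_mul, pow_mul, Real.sq_sqrt hx,
    Real.sq_sqrt hy, Real.sq_sqrt hz, Real.sq_sqrt hD.le]
  exact h

end GN


theorem gagliardo_nirenberg (M : E2 → ℝ) (hM : ContDiff ℝ (⊤ : ℕ∞) M)
    (hMint : ∀ j ≤ 9, Integrable fun x' : E2 => ‖iteratedFDeriv ℝ j M x'‖ ^ 2)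
    (k : ℕ) (hk : 2 ≤ k) :
    ∃ C : ℝ, 0 < C ∧
      ∀ f : E3 → ℝ, ContDiffOn ℝ k f (closure (Omg M)) →
        (∀ j ≤ k, IntegrableOn (fun x => ‖iteratedFDeriv ℝ j f x‖ ^ 2) (Omg M)) →
        sobNorm (k - 1) (Omg M) f ≤
          C * sobNorm k (Omg M) f ^ (1 - 1 / (k:ℝ)) *
            Real.sqrt (∫ x in Omg M, f x ^ 2) ^ (1 / (k:ℝ)) := by
  obtain ⟨L, hL⟩ := gn_lip M hM hMint
  obtain ⟨C, hC, hstep⟩ := gn_step hL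
  set CC : ℝ := k * (1 + k * C) with hCC
  have hkp : (0:ℝ) < k := by positivity
  have hCp : 0 < CC := by positivity
  set D : ℝ := CC ^ (∑ i ∈ Finset.range (k - 1 + 1), i) with hDdef
  have hD : 0 < D := by positivity
  refine ⟨√D ^ (1 / (k:ℝ)), by positivity, ?_⟩
  intro f hf hint
  set a : ℕ → ℝ := fun j => ∫ x in Omg M, ‖iteratedFDeriv ℝ j f x‖ ^ 2 with ha
  have ha0 : ∀ j, 0 ≤ a j := fun j => integral_nonneg fun _ => by positivity
  have hs := hstep k f (hf.mono subset_closure) hint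
  have hsum := gn_sums a ha0 C hC k hs
  have halg := gn_alg (fun j => ∑ i ∈ Finset.range (j + 1), a i)
    (fun j => Finset.sum_nonneg fun i _ => ha0 i) CC hCp k hsum (k - 1) (by omega)
  have hk1 : k - 1 + 1 = k := by omega
  have h0 : ∫ x in Omg M, f x ^ 2 = ∑ i ∈ Finset.range (0 + 1), a i := by
    simp [ha]
  rw [h0]
  unfold sobNorm
  refine gn_final k hk D _ _ _ hD (Finset.sum_nonneg fun i _ => ha0 i)
    (Finset.sum_nonneg fun i _ => ha0 i) (Finset.sum_nonneg fun i _ => ha0 i) ?_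
  simp only [hk1] at halg hDdef ⊢
  rw [hDdef]
  exact halg
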